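/- (Strassen's characterization of the Prokhorov distance.) Let n be a positive integer and 1 ≤ p < ∞ a real number, and equip ℝ^n with the ℓ_p norm. Let D and D' be Borel probability measures on ℝ^n and let ε ≥ 0. Then the Lévy–Prokhorov distance satisfies π_p(D, D') ≤ ε if and only if there exists a coupling γ of D and D' — i.e., a Borel probability measure γ on ℝ^n × ℝ^n whose first marginal is D and whose second marginal is D' — such that γ({(x,y) : ‖x − y‖_p > ε}) ≤ ε. -/

import Mathlib

open scoped BigOperators
open MeasureTheory

/-- The ℓ_p norm on `Fin m → ℝ` for a real exponent `p`. -/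
noncomputable def pnorm (p : ℝ) {m : ℕ} (x : Fin m → ℝ) : ℝ :=
  (∑ i, |x i| ^ p) ^ (1 / p)

/-- The open ε-thickening of a set w.r.t. the ℓ_p distance. -/
def thick (p : ℝ) {n : ℕ} (ε : ℝ) (A : Set (Fin n → ℝ)) : Set (Fin n → ℝ) :=
  {x | ∃ y ∈ A, pnorm p (x - y) < ε}

/-- The Lévy–Prokhorov distance between Borel measures on `(ℝ^n, ‖·‖_p)`. -/
noncomputable def prokhorov (p : ℝ) {n : ℕ} (P Q : Measure (Fin n → ℝ)) : ℝ :=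
  sInf {ε : ℝ | 0 < ε ∧ ∀ A : Set (Fin n → ℝ), MeasurableSet A →
    P A ≤ Q (thick p ε A) + ENNReal.ofReal ε ∧
    Q A ≤ P (thick p ε A) + ENNReal.ofReal ε}


lemma hall_nat {ι κ : Type} [Fintype ι] [Fintype κ] (a : ι → ℕ) (b : κ → ℕ) (R : ι → κ → Prop)
    (t : ℕ) [DecidableEq ι] [DecidableEq κ] [DecidableRel R]
    (h : ∀ S : Finset ι, ∑ i ∈ S, a i ≤ ∑ j with (∃ i ∈ S, R i j), b j + t) :
    ∃ π : ι → κ → ℕ, (∀ i, ∑ j, π i j ≤ a i) ∧ (∀ j, ∑ i, π i j ≤ b j) ∧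
      (∀ i j, π i j ≠ 0 → R i j) ∧ ∑ i, a i ≤ ∑ i, ∑ j, π i j + t := by
  classical
  let α := Σ i, Fin (a i)
  let β := (Σ j, Fin (b j)) ⊕ Fin t
  let r : α → β → Prop := fun x y => Sum.elim (fun y => R x.1 y.1) (fun _ => True) y
  have hall : ∀ A : Finset α, A.card ≤ (Finset.univ.filter fun y => ∃ x ∈ A, r x y).card := by
    intro A
    rcases A.eq_empty_or_nonempty with rfl | ⟨x0, hx0⟩
    · simp
    set S := A.image Sigma.fst
    have h1 : A.card ≤ ∑ i ∈ S, a i := by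
      have : A ⊆ S.sigma (fun i => (Finset.univ : Finset (Fin (a i)))) := by
        intro x hx
        exact Finset.mem_sigma.2 ⟨Finset.mem_image_of_mem _ hx, Finset.mem_univ _⟩
      refine (Finset.card_le_card this).trans ?_
      rw [Finset.card_sigma]
      simp
    refine (h1.trans (h S)).trans ?_
    have : ((Finset.univ.filter fun j => ∃ i ∈ S, R i j).sigma
        (fun j => (Finset.univ : Finset (Fin (b j))))).disjSum (Finset.univ : Finset (Fin t)) ⊆
        (Finset.univ.filter fun y => ∃ x ∈ A, r x y) := by
      intro y hy
      rcases y with y | y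
      · simp only [Finset.inl_mem_disjSum, Finset.mem_sigma, Finset.mem_filter, Finset.mem_univ,
          true_and, and_true] at hy ⊢
        obtain ⟨i, hi, hr⟩ := hy
        obtain ⟨x, hx, rfl⟩ := Finset.mem_image.1 hi
        exact ⟨x, hx, hr⟩
      · simp only [Finset.mem_filter, Finset.mem_univ, true_and]
        exact ⟨x0, hx0, trivial⟩
    simpa using Finset.card_le_card this
  obtain ⟨f, hf, hr⟩ := (Fintype.all_card_le_filter_rel_iff_exists_injective r).1 hall
  let g : α → κ → Prop := fun x j => ∃ y : Fin (b j), f x = Sum.inl ⟨j, y⟩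
  have hg : ∀ x j j', g x j → g x j' → j = j' := by
    rintro x j j' ⟨y, hy⟩ ⟨y', hy'⟩
    rw [hy] at hy'
    exact congrArg Sigma.fst (Sum.inl_injective hy')
  have hsum : ∀ x, ∑ j, (if g x j then 1 else 0) = if (∃ j, g x j) then 1 else 0 := by
    intro x
    split_ifs with hx
    · obtain ⟨j, hj⟩ := hx
      rw [Finset.sum_eq_single j]
      · simp [hj]
      · intro j' _ hne
        rw [if_neg]
        exact fun hh => hne (hg _ _ _ hh hj)
      · simp
    · push Not at hx
      simp [hx]
  refine ⟨fun i j => ∑ x : Fin (a i), if g ⟨i, x⟩ j then 1 else 0, ?_, ?_, ?_, ?_⟩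
  · intro i
    rw [Finset.sum_comm]
    simp only [hsum]
    calc _ ≤ ∑ x : Fin (a i), 1 := Finset.sum_le_sum (fun x _ => by split_ifs <;> simp)
      _ = a i := by simp
  · intro j
    have e1 : ∑ i, ∑ x : Fin (a i), (if g ⟨i, x⟩ j then 1 else 0)
        = ∑ x : α, if g x j then 1 else 0 := by
      rw [Fintype.sum_sigma]
    rw [e1, ← Finset.card_filter]
    have : (Finset.univ.filter fun x : α => g x j).image f ⊆
        (Finset.univ : Finset (Fin (b j))).image (fun y => Sum.inl ⟨j, y⟩) := by
      intro y hy
      obtain ⟨x, hx, rfl⟩ := Finset.mem_image.1 hy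
      obtain ⟨y, hy⟩ := (Finset.mem_filter.1 hx).2
      rw [hy]
      exact Finset.mem_image_of_mem _ (Finset.mem_univ _)
    have h2 := Finset.card_le_card this
    rw [Finset.card_image_of_injective _ hf] at h2
    exact h2.trans (Finset.card_image_le.trans (by simp))
  · intro i j hne
    obtain ⟨x, _, hx⟩ := Finset.exists_ne_zero_of_sum_ne_zero hne
    have hx' : g ⟨i, x⟩ j := by
      by_contra hc
      simp [hc] at hx
    obtain ⟨y, hy⟩ := hx'
    have := hr ⟨i, x⟩
    rw [hy] at this
    exact this
  · have e1 : ∑ i, ∑ j, ∑ x : Fin (a i), (if g ⟨i, x⟩ j then 1 else 0)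
        = ∑ x : α, if (∃ j, g x j) then 1 else 0 := by
      rw [Fintype.sum_sigma]
      refine Finset.sum_congr rfl fun i _ => ?_
      rw [Finset.sum_comm]
      simp only [hsum]
    rw [e1, ← Finset.card_filter]
    have e2 : ∑ i, a i = Fintype.card α := by simp [α]
    rw [e2, ← Finset.card_univ,
      ← Finset.card_filter_add_card_filter_not (s := Finset.univ) (fun x : α => ∃ j, g x j)]
    gcongr
    have : (Finset.univ.filter fun x : α => ¬ ∃ j, g x j).image f ⊆
        (Finset.univ : Finset (Fin t)).image Sum.inr := by
      intro y hy
      obtain ⟨x, hx, rfl⟩ := Finset.mem_image.1 hy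
      have hx := (Finset.mem_filter.1 hx).2
      rcases hfx : f x with y | y
      · exact absurd ⟨y.1, y.2, hfx⟩ hx
      · exact Finset.mem_image_of_mem _ (Finset.mem_univ _)
    have h2 := Finset.card_le_card this
    rw [Finset.card_image_of_injective _ hf] at h2
    exact h2.trans (Finset.card_image_le.trans (by simp))

lemma hall_real {ι κ : Type} [Fintype ι] [Fintype κ] (a : ι → ℝ) (b : κ → ℝ) (R : ι → κ → Prop)
    (t η : ℝ) (ha : ∀ i, 0 ≤ a i) (hb : ∀ j, 0 ≤ b j) (ht : 0 ≤ t) (hη : 0 < η)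
    [DecidableEq ι] [DecidableEq κ] [DecidableRel R]
    (h : ∀ S : Finset ι, ∑ i ∈ S, a i ≤ ∑ j with (∃ i ∈ S, R i j), b j + t) :
    ∃ π : ι → κ → ℝ, (∀ i j, 0 ≤ π i j) ∧ (∀ i, ∑ j, π i j ≤ a i) ∧ (∀ j, ∑ i, π i j ≤ b j) ∧
      (∀ i j, π i j ≠ 0 → R i j) ∧ ∑ i, a i ≤ ∑ i, ∑ j, π i j + t + η := by
  obtain ⟨N, hN⟩ := exists_nat_gt ((Fintype.card ι + Fintype.card κ + 1 : ℝ) / η)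
  have hN0 : (0 : ℝ) < N := lt_of_le_of_lt (by positivity) hN
  rw [div_lt_iff₀ hη] at hN
  have hup : ∀ x : ℝ, N * x ≤ (⌊N * x⌋₊ : ℝ) + 1 := fun x => (Nat.lt_floor_add_one _).le
  have hdn : ∀ x : ℝ, 0 ≤ x → (⌊N * x⌋₊ : ℝ) ≤ N * x := fun x hx =>
    Nat.floor_le (by positivity)
  obtain ⟨π, h1, h2, h3, h4⟩ := hall_nat (fun i => ⌊N * a i⌋₊) (fun j => ⌊N * b j⌋₊) R
    (⌊N * t⌋₊ + 1 + Fintype.card κ) (by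
      intro S
      have : (∑ i ∈ S, (⌊N * a i⌋₊ : ℝ)) ≤ ∑ j with (∃ i ∈ S, R i j), (⌊N * b j⌋₊ : ℝ)
          + (⌊N * t⌋₊ + 1 + Fintype.card κ) := by
        calc _ ≤ ∑ i ∈ S, N * a i := Finset.sum_le_sum fun i _ => hdn _ (ha i)
          _ = N * ∑ i ∈ S, a i := by rw [Finset.mul_sum]
          _ ≤ N * (∑ j with (∃ i ∈ S, R i j), b j + t) := by gcongr; exact h S
          _ = ∑ j with (∃ i ∈ S, R i j), N * b j + N * t := by rw [mul_add, Finset.mul_sum]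
          _ ≤ ∑ j with (∃ i ∈ S, R i j), ((⌊N * b j⌋₊ : ℝ) + 1) + (⌊N * t⌋₊ + 1) := by
            gcongr with j
            · exact hup _
            · exact hup _
          _ ≤ _ := by
            rw [Finset.sum_add_distrib]
            have : (∑ j with (∃ i ∈ S, R i j), (1 : ℝ)) ≤ Fintype.card κ := by
              simp only [Finset.sum_const, nsmul_eq_mul, mul_one]
              exact_mod_cast Finset.card_le_univ _
            linarith
      exact_mod_cast this)
  refine ⟨fun i j => π i j / N, fun i j => by positivity, ?_, ?_, ?_, ?_⟩
  · intro i
    rw [← Finset.sum_div, div_le_iff₀ hN0, mul_comm]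
    refine le_trans ?_ (hdn _ (ha i))
    exact_mod_cast h1 i
  · intro j
    rw [← Finset.sum_div, div_le_iff₀ hN0, mul_comm]
    refine le_trans ?_ (hdn _ (hb j))
    exact_mod_cast h2 j
  · intro i j hne
    apply h3
    intro h0
    simp [h0] at hne
  · simp only [← Finset.sum_div]
    have h4' : (∑ i, (⌊N * a i⌋₊ : ℝ)) ≤ ∑ i, ∑ j, (π i j : ℝ)
        + (⌊N * t⌋₊ + 1 + Fintype.card κ) := by exact_mod_cast h4
    have h5 : N * ∑ i, a i ≤ ∑ i, (⌊N * a i⌋₊ : ℝ) + Fintype.card ι := by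
      rw [Finset.mul_sum]
      calc _ ≤ ∑ i, ((⌊N * a i⌋₊ : ℝ) + 1) := Finset.sum_le_sum fun i _ => hup _
        _ = _ := by rw [Finset.sum_add_distrib]; simp
    have h6 := hdn t ht
    have : N * ∑ i, a i ≤ N * ((∑ i, ∑ j, (π i j : ℝ)) / N + t + η) := by
      rw [mul_add, mul_add, mul_div_cancel₀ _ hN0.ne']
      linarith
    exact le_of_mul_le_mul_left this hN0

lemma pnorm_cont (p : ℝ) (hp : 1 ≤ p) (n : ℕ) : Continuous (pnorm p : (Fin n → ℝ) → ℝ) := by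
  have hp0 : 0 ≤ p := by linarith
  unfold pnorm
  refine Continuous.rpow_const (continuous_finsetSum _ fun i _ => ?_) (fun x => Or.inr (by positivity))
  exact Continuous.rpow_const (by fun_prop) (fun x => Or.inr hp0)

lemma pnorm_neg (p : ℝ) {n : ℕ} (x : Fin n → ℝ) : pnorm p (-x) = pnorm p x := by
  simp [pnorm]

lemma pnorm_sub_comm (p : ℝ) {n : ℕ} (x y : Fin n → ℝ) : pnorm p (x - y) = pnorm p (y - x) := by
  rw [← pnorm_neg, neg_sub]

lemma pnorm_zero (p : ℝ) (hp : 1 ≤ p) {n : ℕ} : pnorm p (0 : Fin n → ℝ) = 0 := by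
  have : p ≠ 0 := by linarith
  simp [pnorm, this]

lemma pnorm_add_le (p : ℝ) (hp : 1 ≤ p) {n : ℕ} (x y : Fin n → ℝ) :
    pnorm p (x + y) ≤ pnorm p x + pnorm p y :=
  Real.Lp_add_le Finset.univ x y hp

lemma thick_open (p : ℝ) (hp : 1 ≤ p) {n : ℕ} (ε : ℝ) (A : Set (Fin n → ℝ)) :
    IsOpen (thick p ε A) := by
  have : thick p ε A = ⋃ y ∈ A, {x | pnorm p (x - y) < ε} := by
    ext x; simp [thick]
  rw [this]
  refine isOpen_biUnion fun y _ => ?_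
  exact isOpen_lt ((pnorm_cont p hp n).comp (by fun_prop)) continuous_const

lemma bad_open (p : ℝ) (hp : 1 ≤ p) {n : ℕ} (ε : ℝ) :
    IsOpen {q : (Fin n → ℝ) × (Fin n → ℝ) | ε < pnorm p (q.1 - q.2)} :=
  isOpen_lt continuous_const ((pnorm_cont p hp n).comp (by fun_prop))

/-- easy direction -/
lemma easy_dir (n : ℕ) (p : ℝ) (hp : 1 ≤ p)
    (D D' : Measure (Fin n → ℝ)) (ε : ℝ)  (hε : 0 ≤ ε)
    (γ : Measure ((Fin n → ℝ) × (Fin n → ℝ)))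
    (h1 : γ.map Prod.fst = D) (h2 : γ.map Prod.snd = D')
    (h3 : γ {q | ε < pnorm p (q.1 - q.2)} ≤ ENNReal.ofReal ε) : prokhorov p D D' ≤ ε := by
  refine le_of_forall_gt_imp_ge_of_dense fun e he => ?_
  refine csInf_le ⟨0, fun x hx => hx.1.le⟩ ⟨by linarith, fun A hA => ⟨?_, ?_⟩⟩
  · rw [← h1, ← h2, Measure.map_apply measurable_fst hA,
      Measure.map_apply measurable_snd (thick_open p hp e A).measurableSet]
    refine le_trans (measure_mono (t := (Prod.snd ⁻¹' thick p e A) ∪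
      {q | ε < pnorm p (q.1 - q.2)}) ?_) ((measure_union_le _ _).trans ?_)
    · intro q hq
      by_cases hc : ε < pnorm p (q.1 - q.2)
      · exact Or.inr hc
      · refine Or.inl ⟨q.1, hq, ?_⟩
        rw [pnorm_sub_comm]
        linarith
    · gcongr
      exact h3.trans (ENNReal.ofReal_le_ofReal he.le)
  · rw [← h1, ← h2, Measure.map_apply measurable_snd hA,
      Measure.map_apply measurable_fst (thick_open p hp e A).measurableSet]
    refine le_trans (measure_mono (t := (Prod.fst ⁻¹' thick p e A) ∪
      {q | ε < pnorm p (q.1 - q.2)}) ?_) ((measure_union_le _ _).trans ?_)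
    · intro q hq
      by_cases hc : ε < pnorm p (q.1 - q.2)
      · exact Or.inr hc
      · refine Or.inl ⟨q.2, hq, ?_⟩
        linarith
    · gcongr
      exact h3.trans (ENNReal.ofReal_le_ofReal he.le)

lemma complete_coupling {E : Type*} [MeasurableSpace E] (D D' : Measure E)
    [IsProbabilityMeasure D] [IsProbabilityMeasure D'] (γ₀ : Measure (E × E))
    (h1 : γ₀.map Prod.fst ≤ D) (h2 : γ₀.map Prod.snd ≤ D') :
    ∃ γ : Measure (E × E), IsProbabilityMeasure γ ∧ γ.map Prod.fst = D ∧ γ.map Prod.snd = D' ∧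
      γ₀ ≤ γ := by
  have : IsFiniteMeasure (γ₀.map Prod.fst) := isFiniteMeasure_of_le D h1
  have : IsFiniteMeasure (γ₀.map Prod.snd) := isFiniteMeasure_of_le D' h2
  set μ := D - γ₀.map Prod.fst with hμ
  set ν := D' - γ₀.map Prod.snd with hν
  have eμ : μ + γ₀.map Prod.fst = D := Measure.sub_add_cancel_of_le h1
  have eν : ν + γ₀.map Prod.snd = D' := Measure.sub_add_cancel_of_le h2
  have mμ : μ Set.univ = 1 - γ₀ Set.univ := by
    rw [hμ, Measure.sub_apply .univ h1, measure_univ, Measure.map_apply measurable_fst .univ]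
    simp
  have mν : ν Set.univ = 1 - γ₀ Set.univ := by
    rw [hν, Measure.sub_apply .univ h2, measure_univ, Measure.map_apply measurable_snd .univ]
    simp
  set m := 1 - γ₀ Set.univ
  have mtop : m ≠ ⊤ := ne_top_of_le_ne_top ENNReal.one_ne_top tsub_le_self
  have : IsFiniteMeasure μ := ⟨by rw [mμ]; exact mtop.lt_top⟩
  have : IsFiniteMeasure ν := ⟨by rw [mν]; exact mtop.lt_top⟩
  have e1 : (γ₀ + m⁻¹ • μ.prod ν).map Prod.fst = D := by
    rw [Measure.map_add _ _ measurable_fst, Measure.map_smul, Measure.map_fst_prod, mν, smul_smul]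
    conv_rhs => rw [← eμ]
    rw [add_comm]
    congr 1
    by_cases h0 : m = 0
    · rw [h0, Measure.measure_univ_eq_zero] at mμ
      simp [mμ]
    · rw [ENNReal.inv_mul_cancel h0 mtop, one_smul]
  have e2 : (γ₀ + m⁻¹ • μ.prod ν).map Prod.snd = D' := by
    rw [Measure.map_add _ _ measurable_snd, Measure.map_smul, Measure.map_snd_prod, mμ, smul_smul]
    conv_rhs => rw [← eν]
    rw [add_comm]
    congr 1
    by_cases h0 : m = 0
    · rw [h0, Measure.measure_univ_eq_zero] at mν
      simp [mν]
    · rw [ENNReal.inv_mul_cancel h0 mtop, one_smul]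
  refine ⟨_, ⟨?_⟩, e1, e2, Measure.le_add_right le_rfl⟩
  have : D Set.univ = 1 := measure_univ
  rw [← e1, Measure.map_apply measurable_fst .univ] at this
  simpa using this

lemma limit_coupling (n : ℕ) (p : ℝ) (hp : 1 ≤ p)
    (D D' : Measure (Fin n → ℝ)) [IsProbabilityMeasure D] [IsProbabilityMeasure D']
    (ε : ℝ) (h : ∀ δ > 0, ∃ γ : Measure ((Fin n → ℝ) × (Fin n → ℝ)),
        IsProbabilityMeasure γ ∧ γ.map Prod.fst = D ∧ γ.map Prod.snd = D' ∧
          γ {q | ε + δ < pnorm p (q.1 - q.2)} ≤ ENNReal.ofReal (ε + δ)) :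
    ∃ γ : Measure ((Fin n → ℝ) × (Fin n → ℝ)),
        IsProbabilityMeasure γ ∧ γ.map Prod.fst = D ∧ γ.map Prod.snd = D' ∧
          γ {q | ε < pnorm p (q.1 - q.2)} ≤ ENNReal.ofReal ε := by
  obtain ⟨u, hanti, hpos, hlim⟩ := exists_seq_strictAnti_tendsto (0 : ℝ)
  let P0 : ProbabilityMeasure (Fin n → ℝ) := ⟨D, inferInstance⟩
  let P1 : ProbabilityMeasure (Fin n → ℝ) := ⟨D', inferInstance⟩
  choose g g1 g2 g3 g4 using fun k => h (u k) (hpos k)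
  let G : ℕ → ProbabilityMeasure ((Fin n → ℝ) × (Fin n → ℝ)) := fun k => ⟨g k, g1 k⟩
  have tight : IsTightMeasureSet
      {((μ : ProbabilityMeasure ((Fin n → ℝ) × (Fin n → ℝ))) : Measure ((Fin n → ℝ) × (Fin n → ℝ))) |
        μ ∈ Set.range G} := by
    refine IsTightMeasureSet.prodMk ?_ ?_
    · refine (isTightMeasureSet_singleton (μ := D)).subset ?_
      rintro _ ⟨_, ⟨_, ⟨k, rfl⟩, rfl⟩, rfl⟩
      exact g2 k
    · refine (isTightMeasureSet_singleton (μ := D')).subset ?_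
      rintro _ ⟨_, ⟨_, ⟨k, rfl⟩, rfl⟩, rfl⟩
      exact g3 k
  have hc := isCompact_closure_of_isTightMeasureSet tight
  let L : Filter ℕ := (Filter.hyperfilter ℕ : Ultrafilter ℕ)
  obtain ⟨γ, -, hγ⟩ := hc.ultrafilter_le_nhds ((Filter.hyperfilter ℕ).map G) (by
    rw [Filter.le_principal_iff]
    exact Filter.mem_map.2 (Filter.univ_mem' fun k => subset_closure ⟨k, rfl⟩))
  have hT : Filter.Tendsto G L (nhds γ) := hγ
  have hLa : L ≤ Filter.atTop := Filter.hyperfilter_le_cofinite.trans Nat.cofinite_eq_atTop.le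
  refine ⟨γ, inferInstance, ?_, ?_, ?_⟩
  · have c1 := ((ProbabilityMeasure.continuous_map (f := Prod.fst) continuous_fst).tendsto γ).comp hT
    have c2 : Filter.Tendsto (fun _ : ℕ => P0) L
      (nhds P0) := tendsto_const_nhds
    have := tendsto_nhds_unique_of_eventuallyEq (X := ProbabilityMeasure (Fin n → ℝ)) c1 c2 (Filter.Eventually.of_forall fun k => by
      apply Subtype.ext
      exact g2 k)
    exact congrArg Subtype.val this
  · have c1 := ((ProbabilityMeasure.continuous_map (f := Prod.snd) continuous_snd).tendsto γ).comp hT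
    have c2 : Filter.Tendsto (fun _ : ℕ => P1) L
      (nhds P1) := tendsto_const_nhds
    have := tendsto_nhds_unique_of_eventuallyEq (X := ProbabilityMeasure (Fin n → ℝ)) c1 c2 (Filter.Eventually.of_forall fun k => by
      apply Subtype.ext
      exact g3 k)
    exact congrArg Subtype.val this
  · have e : {q : (Fin n → ℝ) × (Fin n → ℝ) | ε < pnorm p (q.1 - q.2)} =
        ⋃ k, {q | ε + u k < pnorm p (q.1 - q.2)} := by
      ext q
      simp only [Set.mem_ofPred_eq, Set.mem_iUnion]
      constructor
      · intro hq
        obtain ⟨k, hk⟩ := (hlim.eventually_lt_const (sub_pos.2 hq)).exists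
        exact ⟨k, by linarith⟩
      · rintro ⟨k, hk⟩
        linarith [hpos k]
    have hmono : Monotone fun k => {q : (Fin n → ℝ) × (Fin n → ℝ) | ε + u k < pnorm p (q.1 - q.2)} := by
      intro k l hkl q hq
      have := hanti.antitone hkl
      simp only [Set.mem_ofPred_eq] at hq ⊢
      linarith
    rw [e, hmono.measure_iUnion]
    refine iSup_le fun k => ?_
    refine (ProbabilityMeasure.le_liminf_measure_open_of_tendsto hT (bad_open p hp _)).trans ?_
    have hl : Filter.Tendsto (fun l => ENNReal.ofReal (ε + u l)) L (nhds (ENNReal.ofReal ε)) := by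
      refine Filter.Tendsto.mono_left ?_ hLa
      refine ENNReal.tendsto_ofReal ?_
      simpa using hlim.const_add ε
    rw [← hl.liminf_eq]
    refine Filter.liminf_le_liminf ?_
    refine hLa (Filter.eventually_atTop.2 ⟨k, fun l hl => ?_⟩)
    exact (measure_mono (hmono hl)).trans (g4 l)

lemma ennreal_div_mul_le (a b : ENNReal) : a / b * b ≤ a :=
  ENNReal.mul_le_of_le_div le_rfl

lemma sub_marg {E : Type*} [MeasurableSpace E] (D D' : Measure E)
    [IsProbabilityMeasure D] [IsProbabilityMeasure D'] {M : ℕ} (A : Fin M → Set E)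
    (hA : ∀ i, MeasurableSet (A i)) (hdisj : Pairwise (fun i j => Disjoint (A i) (A j)))
    (π : Fin M → Fin M → ℝ) (hπ : ∀ i j, 0 ≤ π i j) (h1 : ∀ i, ∑ j, π i j ≤ D.real (A i))
    (h2 : ∀ j, ∑ i, π i j ≤ D'.real (A j)) (good : Set (E × E))
    (hg : ∀ i j, π i j ≠ 0 → A i ×ˢ A j ⊆ good) :
    ∃ γ₀ : Measure (E × E), γ₀.map Prod.fst ≤ D ∧ γ₀.map Prod.snd ≤ D' ∧
      ENNReal.ofReal (∑ i, ∑ j, π i j) ≤ γ₀ good := by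
  let c : Fin M → Fin M → ENNReal := fun i j => ENNReal.ofReal (π i j) / D (A i) / D' (A j)
  have hsumD : ∀ (μ : Measure E) (B : Set E), ∑ i, μ (B ∩ A i) ≤ μ B := by
    intro μ B
    calc ∑ i, μ (B ∩ A i) = ∑ i, (μ.restrict B) (A i) := by
          refine Finset.sum_congr rfl fun i _ => ?_
          rw [Measure.restrict_apply (hA i), Set.inter_comm]
      _ = (μ.restrict B) (⋃ i ∈ Finset.univ, A i) := by
          rw [measure_biUnion_finset (fun i _ j _ hij => hdisj hij) (fun i _ => hA i)]
      _ ≤ μ.restrict B Set.univ := measure_mono (Set.subset_univ _)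
      _ = μ B := by simp
  have hc1 : ∀ i, ∑ j, c i j * D' (A j) ≤ 1 := by
    intro i
    calc ∑ j, c i j * D' (A j) ≤ ∑ j, ENNReal.ofReal (π i j) / D (A i) :=
          Finset.sum_le_sum fun j _ => ennreal_div_mul_le _ _
      _ = ENNReal.ofReal (∑ j, π i j) / D (A i) := by
          rw [ENNReal.ofReal_sum_of_nonneg (fun j _ => hπ i j)]
          simp only [div_eq_mul_inv, Finset.sum_mul]
      _ ≤ D (A i) / D (A i) := by
          gcongr
          refine (ENNReal.ofReal_le_ofReal (h1 i)).trans ?_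
          rw [ofReal_measureReal]
      _ ≤ 1 := ENNReal.div_self_le_one
  have hc2 : ∀ j, ∑ i, c i j * D (A i) ≤ 1 := by
    intro j
    calc ∑ i, c i j * D (A i) ≤ ∑ i, ENNReal.ofReal (π i j) / D' (A j) :=
          Finset.sum_le_sum fun i _ => by
            have : c i j = ENNReal.ofReal (π i j) / D' (A j) / D (A i) := by
              simp only [c, div_eq_mul_inv]
              ring
            rw [this]
            exact ennreal_div_mul_le _ _
      _ = ENNReal.ofReal (∑ i, π i j) / D' (A j) := by
          rw [ENNReal.ofReal_sum_of_nonneg (fun i _ => hπ i j)]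
          simp only [div_eq_mul_inv, Finset.sum_mul]
      _ ≤ D' (A j) / D' (A j) := by
          gcongr
          refine (ENNReal.ofReal_le_ofReal (h2 j)).trans ?_
          rw [ofReal_measureReal]
      _ ≤ 1 := ENNReal.div_self_le_one
  refine ⟨∑ i, ∑ j, c i j • (D.restrict (A i)).prod (D'.restrict (A j)), ?_, ?_, ?_⟩
  · refine Measure.le_intro fun B hB _ => ?_
    rw [Measure.map_apply measurable_fst hB]
    simp only [Measure.finsetSum_apply, Measure.smul_apply, smul_eq_mul]
    have : ∀ i j, ((D.restrict (A i)).prod (D'.restrict (A j))) (Prod.fst ⁻¹' B)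
        = D (B ∩ A i) * D' (A j) := by
      intro i j
      rw [← Set.prod_univ, Measure.prod_prod, Measure.restrict_apply hB]
      simp
    simp only [this]
    calc ∑ i, ∑ j, c i j * (D (B ∩ A i) * D' (A j))
        = ∑ i, D (B ∩ A i) * ∑ j, c i j * D' (A j) := by
          refine Finset.sum_congr rfl fun i _ => ?_
          rw [Finset.mul_sum]
          refine Finset.sum_congr rfl fun j _ => ?_
          ring
      _ ≤ ∑ i, D (B ∩ A i) * 1 := by
          gcongr with i
          exact hc1 i
      _ ≤ D B := by simpa using hsumD D B
  · refine Measure.le_intro fun B hB _ => ?_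
    rw [Measure.map_apply measurable_snd hB]
    simp only [Measure.finsetSum_apply, Measure.smul_apply, smul_eq_mul]
    have : ∀ i j, ((D.restrict (A i)).prod (D'.restrict (A j))) (Prod.snd ⁻¹' B)
        = D (A i) * D' (B ∩ A j) := by
      intro i j
      rw [← Set.univ_prod, Measure.prod_prod, Measure.restrict_apply hB]
      simp
    simp only [this]
    rw [Finset.sum_comm]
    calc ∑ j, ∑ i, c i j * (D (A i) * D' (B ∩ A j))
        = ∑ j, D' (B ∩ A j) * ∑ i, c i j * D (A i) := by
          refine Finset.sum_congr rfl fun i _ => ?_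
          rw [Finset.mul_sum]
          refine Finset.sum_congr rfl fun j _ => ?_
          ring
      _ ≤ ∑ j, D' (B ∩ A j) * 1 := by
          gcongr with i
          exact hc2 i
      _ ≤ D' B := by simpa using hsumD D' B
  · simp only [Measure.finsetSum_apply, Measure.smul_apply, smul_eq_mul]
    rw [ENNReal.ofReal_sum_of_nonneg (fun i _ => Finset.sum_nonneg fun j _ => hπ i j)]
    refine Finset.sum_le_sum fun i _ => ?_
    rw [ENNReal.ofReal_sum_of_nonneg (fun j _ => hπ i j)]
    refine Finset.sum_le_sum fun j _ => ?_
    by_cases h0 : π i j = 0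
    · simp [h0]
    have hpos : 0 < π i j := lt_of_le_of_ne (hπ i j) (Ne.symm h0)
    have p1 : D (A i) ≠ 0 := by
      intro hz
      have := h1 i
      rw [measureReal_def, hz] at this
      have h3 := Finset.single_le_sum (fun j _ => hπ i j) (Finset.mem_univ j)
      simp at this
      linarith
    have p2 : D' (A j) ≠ 0 := by
      intro hz
      have := h2 j
      rw [measureReal_def, hz] at this
      have h3 := Finset.single_le_sum (fun i _ => hπ i j) (Finset.mem_univ i)
      simp at this
      linarith
    have : D (A i) * D' (A j) ≤ ((D.restrict (A i)).prod (D'.restrict (A j))) good := by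
      refine le_trans (le_of_eq ?_) (measure_mono (hg i j h0))
      rw [Measure.prod_prod]
      simp
    refine le_trans (le_of_eq ?_) (mul_le_mul_right this _)
    rw [mul_comm (D (A i)), ← mul_assoc]
    simp only [c]
    rw [ENNReal.div_mul_cancel p2 (measure_ne_top _ _), ENNReal.div_mul_cancel p1 (measure_ne_top _ _)]

lemma approx_coupling (n : ℕ) (p : ℝ) (hp : 1 ≤ p)
    (D D' : Measure (Fin n → ℝ)) [IsProbabilityMeasure D] [IsProbabilityMeasure D']
    (e δ : ℝ) (he : 0 < e) (hδ : 0 < δ)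
    (h : ∀ A : Set (Fin n → ℝ), MeasurableSet A → D A ≤ D' (thick p e A) + ENNReal.ofReal e) :
    ∃ γ : Measure ((Fin n → ℝ) × (Fin n → ℝ)),
        IsProbabilityMeasure γ ∧ γ.map Prod.fst = D ∧ γ.map Prod.snd = D' ∧
          γ {q | e + δ < pnorm p (q.1 - q.2)} ≤ ENNReal.ofReal (e + δ) := by
  classical
  -- small cells
  obtain ⟨η, hη, hsmall⟩ : ∃ η > 0, ∀ x : Fin n → ℝ, ‖x‖ < η → pnorm p x < δ / 2 := by
    have := (pnorm_cont p hp n).tendsto 0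
    rw [pnorm_zero p hp] at this
    obtain ⟨η, hη, hh⟩ := Metric.eventually_nhds_iff.1 (this.eventually_lt_const (half_pos hδ))
    exact ⟨η, hη, fun x hx => hh (by simpa using hx)⟩
  obtain ⟨As, mA, bA, dA, cA, pA⟩ :=
    SeparableSpace.exists_measurable_partition_diam_le (Fin n → ℝ) (half_pos hη)
  have hcell : ∀ i x y, x ∈ As i → y ∈ As i → pnorm p (x - y) < δ / 2 := by
    intro i x y hx hy
    apply hsmall
    rw [← dist_eq_norm]
    have := (Metric.dist_le_diam_of_mem (bA i) hx hy).trans (dA i)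
    linarith
  -- truncation
  have htail : ∀ μ : Measure (Fin n → ℝ), IsProbabilityMeasure μ →
      ∀ᶠ M in Filter.atTop, μ (⋃ i < M, As i)ᶜ < ENNReal.ofReal (δ / 3) := by
    intro μ _
    have hm : Monotone fun M : ℕ => ⋃ i < M, As i := by
      intro M M' hM
      exact Set.biUnion_subset_biUnion_left fun i (hi : i < M) => lt_of_lt_of_le hi hM
    have := tendsto_measure_iInter_atTop (μ := μ) (s := fun M : ℕ => (⋃ i < M, As i)ᶜ)
      (fun M => (MeasurableSet.compl (MeasurableSet.iUnion fun i =>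
        MeasurableSet.iUnion fun _ => mA i)).nullMeasurableSet)
      (fun M M' hM => Set.compl_subset_compl.2 (hm hM)) ⟨0, measure_ne_top _ _⟩
    have hz : ⋂ M : ℕ, (⋃ i < M, As i)ᶜ = ∅ := by
      rw [← Set.compl_iUnion, Set.compl_empty_iff, Set.eq_univ_iff_forall]
      intro x
      obtain ⟨i, hi⟩ := Set.mem_iUnion.1 (cA ▸ Set.mem_univ x : x ∈ ⋃ i, As i)
      exact Set.mem_iUnion.2 ⟨i + 1, Set.mem_biUnion (Nat.lt_succ_self i) hi⟩
    rw [hz, measure_empty] at this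
    exact this.eventually_lt_const (by simpa using hδ)
  obtain ⟨M, hM1, hM2⟩ := ((htail D inferInstance).and (htail D' inferInstance)).exists
  let A : Fin M → Set (Fin n → ℝ) := fun i => As i
  have hAd : Pairwise (fun i j => Disjoint (A i) (A j)) := fun i j hij =>
    pA (fun hh => hij (Fin.ext hh))
  have hAU : (⋃ i < M, As i) = ⋃ i : Fin M, A i := by
    ext x
    simp only [Set.mem_iUnion, A]
    constructor
    · rintro ⟨i, hi, hx⟩
      exact ⟨⟨i, hi⟩, hx⟩
    · rintro ⟨i, hx⟩
      exact ⟨i, i.2, hx⟩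
  rw [hAU] at hM1 hM2
  have hUm : MeasurableSet (⋃ i : Fin M, A i) := MeasurableSet.iUnion fun i => mA i
  have hsumS : ∀ (μ : Measure (Fin n → ℝ)) [IsProbabilityMeasure μ] (S : Finset (Fin M)),
      ∑ i ∈ S, μ.real (A i) = μ.real (⋃ i ∈ S, A i) := by
    intro μ _ S
    rw [measureReal_biUnion_finset (fun i _ j _ hij => hAd hij) (fun i _ => mA i)]
  have hM1' : D.real (⋃ i : Fin M, A i)ᶜ ≤ δ / 3 :=
    ENNReal.toReal_le_of_le_ofReal (by positivity) hM1.le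
  have hM2' : D'.real (⋃ i : Fin M, A i)ᶜ ≤ δ / 3 :=
    ENNReal.toReal_le_of_le_ofReal (by positivity) hM2.le
  let R : Fin M → Fin M → Prop := fun i j => ∃ x ∈ A i, ∃ y ∈ A j, pnorm p (y - x) < e
  obtain ⟨π, hπ, h1, h2, h3, h4⟩ := hall_real (fun i => D.real (A i)) (fun j => D'.real (A j)) R
    (e + δ / 3) (δ / 3) (fun _ => measureReal_nonneg) (fun _ => measureReal_nonneg)
    (by positivity) (by positivity) (by
      intro S
      rw [hsumS D S, hsumS D' _]
      suffices key : ∀ T : Finset (Fin M), (∀ j, (∃ i ∈ S, R i j) → j ∈ T) →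
          D.real (⋃ i ∈ S, A i) ≤ D'.real (⋃ j ∈ T, A j) + (e + δ / 3) from
        key _ (fun j hj => by simpa using hj)
      intro T hT
      have hSm : MeasurableSet (⋃ i ∈ S, A i) := Finset.measurableSet_biUnion _ fun i _ => mA i
      have a1 : D.real (⋃ i ∈ S, A i) ≤ D'.real (thick p e (⋃ i ∈ S, A i)) + e := by
        have := ENNReal.toReal_mono (by simp) (h _ hSm)
        rw [ENNReal.toReal_add (measure_ne_top _ _) (by simp), ENNReal.toReal_ofReal he.le] at this
        exact this
      have a2 : thick p e (⋃ i ∈ S, A i) ⊆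
          (⋃ j ∈ T, A j) ∪ (⋃ i : Fin M, A i)ᶜ := by
        rintro y ⟨x, hx, hxy⟩
        by_cases hy : y ∈ ⋃ i : Fin M, A i
        · left
          obtain ⟨j, hj⟩ := Set.mem_iUnion.1 hy
          simp only [Set.mem_iUnion, exists_prop] at hx
          obtain ⟨i, hi, hx⟩ := hx
          refine Set.mem_biUnion (x := j) ?_ hj
          exact hT j ⟨i, hi, x, hx, y, hj, hxy⟩
        · exact Or.inr hy
      have a3 := (measureReal_mono (μ := D') a2).trans (measureReal_union_le _ _)
      linarith)
  have htot : 1 - (e + δ) ≤ ∑ i, ∑ j, π i j := by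
    have := hsumS D Finset.univ
    simp only [Finset.mem_univ, Set.iUnion_true] at this
    rw [this] at h4
    have hc := probReal_compl_eq_one_sub (μ := D) hUm
    linarith
  obtain ⟨γ₀, g1, g2, g3⟩ := sub_marg D D' A (fun i => mA i) hAd π hπ h1 h2
    {q | e + δ < pnorm p (q.1 - q.2)}ᶜ (by
      intro i j hij q hq
      obtain ⟨x, hx, y, hy, hxy⟩ := h3 i j hij
      simp only [Set.mem_compl_iff, Set.mem_ofPred_eq, not_lt]
      have e1 := hcell i q.1 x hq.1 hx
      have e2 := hcell j y q.2 hy hq.2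
      rw [pnorm_sub_comm] at hxy
      have t1 := pnorm_add_le p hp (q.1 - x) (x - y)
      have t2 := pnorm_add_le p hp (q.1 - x + (x - y)) (y - q.2)
      have : q.1 - x + (x - y) + (y - q.2) = q.1 - q.2 := by abel
      rw [this] at t2
      linarith)
  obtain ⟨γ, i1, i2, i3, i4⟩ := complete_coupling D D' γ₀ g1 g2
  refine ⟨γ, i1, i2, i3, ?_⟩
  have hb := (bad_open p hp (n := n) (e + δ)).measurableSet
  have k1 := g3.trans (i4 _)
  rw [prob_compl_eq_one_sub hb] at k1
  have k2 : ENNReal.ofReal (1 - (e + δ)) ≤ 1 - γ {q | e + δ < pnorm p (q.1 - q.2)} :=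
    (ENNReal.ofReal_le_ofReal htot).trans k1
  rw [ENNReal.ofReal_sub _ (by positivity), ENNReal.ofReal_one] at k2
  have hle : γ {q | e + δ < pnorm p (q.1 - q.2)} ≤ 1 := prob_le_one
  rw [tsub_le_iff_right] at k2
  by_contra hcon
  push Not at hcon
  have : 1 - γ {q | e + δ < pnorm p (q.1 - q.2)} + ENNReal.ofReal (e + δ) <
      1 - γ {q | e + δ < pnorm p (q.1 - q.2)} + γ {q | e + δ < pnorm p (q.1 - q.2)} :=
    ENNReal.add_lt_add_left (ne_top_of_le_ne_top ENNReal.one_ne_top tsub_le_self) hcon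
  rw [tsub_add_cancel_of_le hle] at this
  exact absurd k2 (not_le.2 this)

/-- Strassen's characterization of the Prokhorov distance: `π_p(D, D') ≤ ε` iff there is
a coupling `γ` of `D` and `D'` with `γ({(x,y) : ‖x - y‖_p > ε}) ≤ ε`. -/
theorem stmt10 (n : ℕ) (hn : 0 < n) (p : ℝ) (hp : 1 ≤ p)
    (D D' : Measure (Fin n → ℝ)) [IsProbabilityMeasure D] [IsProbabilityMeasure D']
    (ε : ℝ) (hε : 0 ≤ ε) :
    prokhorov p D D' ≤ ε ↔
      ∃ γ : Measure ((Fin n → ℝ) × (Fin n → ℝ)),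
        IsProbabilityMeasure γ ∧ γ.map Prod.fst = D ∧ γ.map Prod.snd = D' ∧
          γ {q | ε < pnorm p (q.1 - q.2)} ≤ ENNReal.ofReal ε := by

  constructor
  · intro h
    refine limit_coupling n p hp D D' ε fun δ hδ => ?_
    have hne : {ε : ℝ | 0 < ε ∧ ∀ A : Set (Fin n → ℝ), MeasurableSet A →
        D A ≤ D' (thick p ε A) + ENNReal.ofReal ε ∧
        D' A ≤ D (thick p ε A) + ENNReal.ofReal ε}.Nonempty := by
      refine ⟨1, one_pos, fun A _ => ?_⟩
      rw [ENNReal.ofReal_one]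
      exact ⟨prob_le_one.trans le_add_self, prob_le_one.trans le_add_self⟩
    obtain ⟨e, ⟨he, hA⟩, hlt⟩ := exists_lt_of_csInf_lt hne
      (show sInf _ < ε + δ from lt_of_le_of_lt h (by linarith))
    obtain ⟨γ, h1, h2, h3, h4⟩ := approx_coupling n p hp D D' e (ε + δ - e) he (by linarith)
      fun A mA => (hA A mA).1
    rw [add_sub_cancel] at h4
    exact ⟨γ, h1, h2, h3, h4⟩
  · rintro ⟨γ, -, h1, h2, h3⟩
    exact easy_dir n p hp D D' ε hε γ h1 h2 h3
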